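/- arXiv:2311.12609 — 3 statements merged into one kernel-verified Lean document; each statement's English description precedes it below -/
import Mathlib

section
/- Let the predictor be initialized as π₀ ∼ κ where κ is absolutely continuous with respect to φ, and let γ ∈ Γ_WS. Then every π̂ ∈ P_n(𝕏) that is reachable from this initialization under γ — i.e., such that P^γ(π̂_t = π̂ | π₀ ∼ κ) > 0 for some t — belongs to P_n^φ(𝕏). -/
/-!
Being `φ`-null is preserved by the predictor dynamics under every stationary policy, because the
uniform policy plays each quantizer with positive probability. If `N` is a measurable `φ`-null
set, invariance gives `∫ Tker 1_N ∂φ = φ N = 0`, and the integrand is nonnegative on the simplex,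
so for `φ`-almost every `π` no pair `(Q, q)` with `π(Q⁻¹ q) > 0` moves `π` into `N`
(`ae_nextPred_notMem`). This holds for all finitely many `Q` simultaneously, hence for `Q = γ(π)`,
whether or not `γ` is measurable. By induction on `t`, a function that vanishes `φ`-a.e. has
`iterWS`-iterates that vanish `φ`-a.e. (`iterWS_ae_zero`), therefore `κ`-a.e. Applied to the
indicator of a `φ`-null bin, this shows that the bin is never reached.
-/

open Filter MeasureTheory Finset Set Topology

section FiniteCore

variable {X M Xhat : Type*}

/-- An encoder (quantization) policy: at time `t` it maps past channel symbols and the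
source samples up to time `t` to a channel symbol. -/
def EncPolicy (X M : Type*) :=
  (t : ℕ) → (Fin t → M) → (Fin (t + 1) → X) → M

/-- A decoder policy: at time `t` it maps the channel symbols up to time `t` to a
reproduction symbol. -/
def DecPolicy (M Xhat : Type*) :=
  (t : ℕ) → (Fin (t + 1) → M) → Xhat

/-- The channel symbols produced by an encoder policy along a source path. -/
def qSeq (γ : EncPolicy X M) (x : ℕ → X) : ℕ → M
  | t => γ t (fun i => qSeq γ x i.val) (fun i => x i.val)
termination_by t => t
decreasing_by exact i.isLt

/-- Extension of a finite source path to an infinite one (by an arbitrary constant). -/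
noncomputable def extPath [Nonempty X] (t : ℕ) (x : Fin (t + 1) → X) : ℕ → X :=
  fun s => if h : s < t + 1 then x ⟨s, h⟩ else Classical.arbitrary X

/-- Probability of a finite source path under initial distribution `π₀` and
transition matrix `K`. -/
def pathProb [Fintype X] (K : X → X → ℝ) (π₀ : X → ℝ) (t : ℕ) (x : Fin (t + 1) → X) : ℝ :=
  π₀ (x 0) * ∏ i : Fin t, K (x i.castSucc) (x i.succ)

/-- Expected distortion `E[d(X_t, X̂_t)]` at time `t`. -/
noncomputable def expDist [Fintype X] [Nonempty X] (K : X → X → ℝ) (π₀ : X → ℝ)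
    (d : X → Xhat → ℝ) (γ : EncPolicy X M) (δ : DecPolicy M Xhat) (t : ℕ) : ℝ :=
  ∑ x : Fin (t + 1) → X, pathProb K π₀ t x *
    d (x (Fin.last t)) (δ t (fun i => qSeq γ (extPath t x) i.val))

/-- Long-run average distortion of an encoder/decoder pair. -/
noncomputable def avgCost [Fintype X] [Nonempty X] (K : X → X → ℝ) (π₀ : X → ℝ)
    (d : X → Xhat → ℝ) (γ : EncPolicy X M) (δ : DecPolicy M Xhat) : ℝ :=
  Filter.limsup (fun T : ℕ => (∑ t ∈ Finset.range T, expDist K π₀ d γ δ t) / (T : ℝ))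
    Filter.atTop

/-- Discounted distortion of an encoder/decoder pair. -/
noncomputable def discCost [Fintype X] [Nonempty X] (β : ℝ) (K : X → X → ℝ) (π₀ : X → ℝ)
    (d : X → Xhat → ℝ) (γ : EncPolicy X M) (δ : DecPolicy M Xhat) : ℝ :=
  ∑' t : ℕ, β ^ t * expDist K π₀ d γ δ t

/-- Average distortion of an encoder policy, under optimal decoding. -/
noncomputable def avgJ [Fintype X] [Nonempty X] (K : X → X → ℝ) (π₀ : X → ℝ)
    (d : X → Xhat → ℝ) (γ : EncPolicy X M) : ℝ :=
  ⨅ δ : DecPolicy M Xhat, avgCost K π₀ d γ δ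

/-- Optimal average distortion over all encoder policies. -/
noncomputable def avgJstar (M : Type*) [Fintype X] [Nonempty X] (K : X → X → ℝ) (π₀ : X → ℝ)
    (d : X → Xhat → ℝ) : ℝ :=
  ⨅ γ : EncPolicy X M, avgJ K π₀ d γ

/-- Discounted distortion of an encoder policy, under optimal decoding. -/
noncomputable def discJ [Fintype X] [Nonempty X] (β : ℝ) (K : X → X → ℝ) (π₀ : X → ℝ)
    (d : X → Xhat → ℝ) (γ : EncPolicy X M) : ℝ :=
  ⨅ δ : DecPolicy M Xhat, discCost β K π₀ d γ δ

/-- Optimal discounted distortion over all encoder policies. -/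
noncomputable def discJstar (M : Type*) [Fintype X] [Nonempty X] (β : ℝ) (K : X → X → ℝ)
    (π₀ : X → ℝ) (d : X → Xhat → ℝ) : ℝ :=
  ⨅ γ : EncPolicy X M, discJ β K π₀ d γ

/-- `t`-step transition probabilities of the source. -/
def Kpow [Fintype X] [DecidableEq X] (K : X → X → ℝ) : ℕ → X → X → ℝ
  | 0 => fun x y => if x = y then 1 else 0
  | t + 1 => fun x y => ∑ z, K x z * Kpow K t z y

/-- `K` is a stochastic (Markov transition) matrix. -/
def IsMarkovMatrix [Fintype X] (K : X → X → ℝ) : Prop :=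
  ∀ x, (∀ y, 0 ≤ K x y) ∧ ∑ y, K x y = 1

/-- Primitivity of a transition matrix; for finite chains this is equivalent to
irreducibility together with aperiodicity. -/
def IsPrimitiveMat [Fintype X] [DecidableEq X] (K : X → X → ℝ) : Prop :=
  ∃ t : ℕ, ∀ x y, 0 < Kpow K t x y

/-- `ζ` is an invariant distribution of the source. -/
def IsInvariantDist [Fintype X] (K : X → X → ℝ) (ζ : X → ℝ) : Prop :=
  ζ ∈ stdSimplex ℝ X ∧ ∀ y, ∑ x, ζ x * K x y = ζ y

/-- Predictor update `π_{t+1}` from `π_t`, the quantizer `Q_t` and symbol `q_t`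
(Bayesian update followed by one-step prediction). -/
noncomputable def nextPred [Fintype X] [DecidableEq M] (K : X → X → ℝ) (π : X → ℝ)
    (Q : X → M) (q : M) : X → ℝ :=
  fun x' => (∑ x ∈ Finset.univ.filter (fun x => Q x = q), K x x' * π x) /
    (∑ x ∈ Finset.univ.filter (fun x => Q x = q), π x)

/-- The predictor as a function of the past channel symbols, under the stationary
Walrand–Varaiya policy `γws` with initial distribution `π₀`. -/
noncomputable def predOfHist [Fintype X] [DecidableEq M] (K : X → X → ℝ)
    (γws : (X → ℝ) → X → M) (π₀ : X → ℝ) : (t : ℕ) → (Fin t → M) → X → ℝ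
  | 0, _ => π₀
  | t + 1, qs =>
      nextPred K (predOfHist K γws π₀ t fun i => qs i.castSucc)
        (γws (predOfHist K γws π₀ t fun i => qs i.castSucc)) (qs (Fin.last t))

/-- The encoder policy induced by a stationary Walrand–Varaiya policy `γws`. -/
noncomputable def wsEncoder [Fintype X] [DecidableEq M] (K : X → X → ℝ)
    (γws : (X → ℝ) → X → M) (π₀ : X → ℝ) : EncPolicy X M :=
  fun t qs xs => γws (predOfHist K γws π₀ t qs) (xs (Fin.last t))

/-- The per-stage cost `c(π,Q)` (expected distortion under optimal decoding). -/
noncomputable def costC [Fintype X] [Fintype M] [DecidableEq M] [Fintype Xhat] [Nonempty Xhat]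
    (d : X → Xhat → ℝ) (π : X → ℝ) (Q : X → M) : ℝ :=
  ∑ q : M, Finset.univ.inf' Finset.univ_nonempty
    (fun xh : Xhat => ∑ x ∈ Finset.univ.filter (fun x => Q x = q), π x * d x xh)

/-- The uniform grid `P_n(𝕏)` in the probability simplex. -/
def Pgrid [Fintype X] (n : ℕ) : Set (X → ℝ) :=
  {p | p ∈ stdSimplex ℝ X ∧ ∀ x, ∃ k : ℕ, p x = (k : ℝ) / n}

/-- Euclidean distance on distributions. -/
noncomputable def eudist [Fintype X] (p q : X → ℝ) : ℝ :=
  Real.sqrt (∑ x, (p x - q x) ^ 2)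

/-- `nn` is a Euclidean nearest-neighbor map onto `P_n(𝕏)`. -/
def IsNN [Fintype X] (n : ℕ) (nn : (X → ℝ) → X → ℝ) : Prop :=
  ∀ π ∈ stdSimplex ℝ X, nn π ∈ Pgrid n ∧ ∀ p ∈ Pgrid n, eudist π (nn π) ≤ eudist π p

/-- Total variation distance (in its `ℓ¹` form) on a finite alphabet. -/
def tvDist [Fintype X] (p q : X → ℝ) : ℝ := ∑ x, |p x - q x|

end FiniteCore

section KernelFun

/-- Transition operator (acting on bounded measurable functions) of the predictor process
under the uniform exploration policy. -/
noncomputable def Tker (M : Type*) {X : Type*} [Fintype X] [DecidableEq X]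
    [Fintype M] [DecidableEq M] (K : X → X → ℝ) (g : (X → ℝ) → ℝ) : (X → ℝ) → ℝ :=
  fun π => (Fintype.card (X → M) : ℝ)⁻¹ * ∑ Q : X → M, ∑ q : M,
    (∑ x ∈ Finset.univ.filter (fun x => Q x = q), π x) * g (nextPred K π Q q)

/-- `φ` is an invariant probability measure of the predictor process under the uniform
exploration policy, supported on the probability simplex. -/
def IsPredInvariant (M : Type*) {X : Type*} [Fintype X] [DecidableEq X]
    [Fintype M] [DecidableEq M] (K : X → X → ℝ) (φ : Measure (X → ℝ)) : Prop :=
  IsProbabilityMeasure φ ∧ φ (stdSimplex ℝ X)ᶜ = 0 ∧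
    ∀ g : (X → ℝ) → ℝ, Measurable g → (∃ C, ∀ π, |g π| ≤ C) →
      ∫ π, Tker M K g π ∂φ = ∫ π, g π ∂φ

/-- `t`-step transition operator of the predictor process under the stationary
Walrand–Varaiya policy `γws`, acting on functions; `iterWS K γws t g π` is the expectation
of `g(π_t)` when `π₀ = π`. -/
noncomputable def iterWS {X M : Type*} [Fintype X] [Fintype M] [DecidableEq M] (K : X → X → ℝ)
    (γws : (X → ℝ) → X → M) : ℕ → ((X → ℝ) → ℝ) → (X → ℝ) → ℝ
  | 0, g => g
  | t + 1, g => fun π => ∑ q : M, (∑ x ∈ Finset.univ.filter (fun x => γws π x = q), π x) *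
      iterWS K γws t g (nextPred K π (γws π) q)

end KernelFun

section Aux

variable {X M : Type*} [Fintype X] [DecidableEq M]

/-- Probability of the symbol `q` when `Q` quantizes a source sample of law `π`. -/
def symWeight (Q : X → M) (q : M) (π : X → ℝ) : ℝ :=
  ∑ x ∈ Finset.univ.filter (fun x => Q x = q), π x

lemma symWeight_nonneg (Q : X → M) (q : M) {π : X → ℝ} (hπ : π ∈ stdSimplex ℝ X) :
    0 ≤ symWeight Q q π :=
  Finset.sum_nonneg fun x _ => hπ.1 x

lemma symWeight_le_one (Q : X → M) (q : M) {π : X → ℝ} (hπ : π ∈ stdSimplex ℝ X) :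
    symWeight Q q π ≤ 1 := by
  rw [← hπ.2]
  exact Finset.sum_le_sum_of_subset_of_nonneg (Finset.filter_subset _ _) fun x _ _ => hπ.1 x

lemma measurable_symWeight (Q : X → M) (q : M) :
    Measurable (symWeight Q q : (X → ℝ) → ℝ) := by
  unfold symWeight
  fun_prop

lemma measurable_nextPred (K : X → X → ℝ) (Q : X → M) (q : M) :
    Measurable fun π : X → ℝ => nextPred K π Q q := by
  unfold nextPred
  fun_prop

variable [DecidableEq X] [Fintype M]

/-- From `φ`-almost every `π`, no quantizer and symbol of positive probability lead into a given
measurable `φ`-null set. -/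
lemma ae_nextPred_notMem [Nonempty M] (K : X → X → ℝ) (φ : Measure (X → ℝ))
    (hφ : IsPredInvariant M K φ) (N : Set (X → ℝ)) (hN : MeasurableSet N) (hN0 : φ N = 0) :
    ∀ᵐ π ∂φ, ∀ (Q : X → M) (q : M), symWeight Q q π = 0 ∨ nextPred K π Q q ∉ N := by
  obtain ⟨hprob, hsupp, hinv⟩ := hφ
  have hS : ∀ᵐ π ∂φ, π ∈ stdSimplex ℝ X := hsupp
  let g : (X → ℝ) → ℝ := N.indicator fun _ => 1
  have hg : Measurable g := measurable_const.indicator hN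
  have hg0 : ∀ π, 0 ≤ g π := fun π => Set.indicator_nonneg (fun _ _ => zero_le_one) π
  have hg1 : ∀ π, g π ≤ 1 := fun π => Set.indicator_le_self' (fun _ _ => zero_le_one) π
  have hterm : ∀ (Q : X → M) (q : M),
      Integrable (fun π => symWeight Q q π * g (nextPred K π Q q)) φ := by
    intro Q q
    refine Integrable.of_bound ((measurable_symWeight Q q).mul
      (hg.comp (measurable_nextPred K Q q))).aestronglyMeasurable 1 ?_
    filter_upwards [hS] with π hπ
    rw [Real.norm_of_nonneg (mul_nonneg (symWeight_nonneg Q q hπ) (hg0 _))]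
    exact mul_le_one₀ (symWeight_le_one Q q hπ) (hg0 _) (hg1 _)
  have hint : Integrable (Tker M K g) φ :=
    (integrable_finsetSum _ fun Q _ => integrable_finsetSum _ fun q _ => hterm Q q).const_mul _
  have hnn : 0 ≤ᵐ[φ] Tker M K g := by
    filter_upwards [hS] with π hπ
    exact mul_nonneg (by positivity) (Finset.sum_nonneg fun Q _ => Finset.sum_nonneg fun q _ =>
      mul_nonneg (symWeight_nonneg Q q hπ) (hg0 _))
  have hzero : ∫ π, Tker M K g π ∂φ = 0 := by
    rw [hinv g hg ⟨1, fun π => by rw [abs_of_nonneg (hg0 π)]; exact hg1 π⟩]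
    simp [g, integral_indicator hN, Measure.real, hN0]
  have hae := (integral_eq_zero_iff_of_nonneg_ae hnn hint).1 hzero
  filter_upwards [hS, hae] with π hπ h0 Q q
  have hn : ∀ (Q : X → M) (q : M), 0 ≤ symWeight Q q π * g (nextPred K π Q q) := fun Q q =>
    mul_nonneg (symWeight_nonneg Q q hπ) (hg0 _)
  have hcard : (Fintype.card (X → M) : ℝ)⁻¹ ≠ 0 :=
    inv_ne_zero (Nat.cast_ne_zero.2 Fintype.card_ne_zero)
  have h1 : ∑ Q : X → M, ∑ q : M, symWeight Q q π * g (nextPred K π Q q) = 0 :=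
    (mul_eq_zero.1 h0).resolve_left hcard
  have h2 := (Finset.sum_eq_zero_iff_of_nonneg fun Q _ =>
    Finset.sum_nonneg fun q _ => hn Q q).1 h1 Q (Finset.mem_univ _)
  have h3 := (Finset.sum_eq_zero_iff_of_nonneg fun q _ => hn Q q).1 h2 q (Finset.mem_univ _)
  refine (mul_eq_zero.1 h3).imp_right fun h hmem => ?_
  simp [g, hmem] at h

/-- Neither `g` nor the policy is required to be measurable. -/
lemma iterWS_ae_zero [Nonempty M] (K : X → X → ℝ) (φ : Measure (X → ℝ))
    (hφ : IsPredInvariant M K φ) (γws : (X → ℝ) → X → M) (g : (X → ℝ) → ℝ)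
    (hg : ∀ᵐ π ∂φ, g π = 0) (t : ℕ) : ∀ᵐ π ∂φ, iterWS K γws t g π = 0 := by
  induction t with
  | zero => exact hg
  | succ t ih =>
    -- The exceptional set may fail to be measurable; a measurable null superset replaces it.
    obtain ⟨N, hsub, hN, hN0⟩ := exists_measurable_superset_of_null (ae_iff.1 ih)
    filter_upwards [ae_nextPred_notMem K φ hφ N hN hN0] with π hπ
    refine Finset.sum_eq_zero fun q _ => mul_eq_zero.2 ?_
    exact (hπ (γws π) q).imp_right fun h => by_contra fun h' => h (hsub h')

end Aux

/-- Let the predictor be initialized as `π₀ ∼ κ` with `κ ≪ φ`, where `φ`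
is the unique invariant measure of the predictor process under the uniform policy, and let
`γws` be a stationary Walrand–Varaiya policy. Then every grid point `πhat ∈ P_n(𝕏)` that
is reachable under `γws` (i.e. `P^γ(π̂_t = πhat | π₀ ∼ κ) > 0` for some `t`) belongs to
`P_n^φ(𝕏)`, i.e. its quantization bin has positive `φ`-measure. -/
theorem stmt12 {X M : Type*}
    [Fintype X] [Nonempty X] [DecidableEq X]
    [Fintype M] [Nonempty M] [DecidableEq M]
    (K : X → X → ℝ) (hK : IsMarkovMatrix K) (hprim : IsPrimitiveMat K)
    (φ : Measure (X → ℝ)) (hφ : IsPredInvariant M K φ)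
    (n : ℕ) (hn : 1 ≤ n) (nn : (X → ℝ) → X → ℝ) (hnn : IsNN n nn)
    (κ : Measure (X → ℝ)) (hκ : IsProbabilityMeasure κ) (hac : κ ≪ φ)
    (γws : (X → ℝ) → X → M) :
    ∀ πhat ∈ Pgrid n,
      (∃ t : ℕ, 0 < ∫ π,
          iterWS K γws t
            (Set.indicator {π' | π' ∈ stdSimplex ℝ X ∧ nn π' = πhat} fun _ => (1 : ℝ)) π ∂κ) →
      0 < φ {π' | π' ∈ stdSimplex ℝ X ∧ nn π' = πhat} := by
  rintro πhat - ⟨t, ht⟩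
  refine pos_iff_ne_zero.2 fun h0 => ht.ne' ?_
  have hg : ∀ᵐ π ∂φ, (Set.indicator {π' | π' ∈ stdSimplex ℝ X ∧ nn π' = πhat}
      fun _ => (1 : ℝ)) π = 0 := by
    filter_upwards [measure_eq_zero_iff_ae_notMem.1 h0] with π hπ
    exact Set.indicator_of_notMem hπ fun _ => (1 : ℝ)
  exact integral_eq_zero_of_ae (hac.ae_le (iterWS_ae_zero K φ hφ γws _ hg t))
end

section
/- The invariant distribution ζ of the source lies in the support of φ, the unique invariant measure of the predictor process under the uniform policy: every open neighborhood of ζ in P(𝕏) has positive φ-measure. -/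
/-!
A constant quantizer conveys no information: with it the predictor update is the plain prediction
step `π ↦ πK` (`sourceStep`). The uniform policy picks a given constant quantizer with positive
probability, so the one-step law of the predictor from `π` charges `πK`, and invariance of `φ`
shows that the preimage under `π ↦ πK` of a `φ`-null measurable set is again `φ`-null
(`null_preimage_sourceStep`). Were `φ V = 0`, almost every `π` would satisfy `πK^n ∉ V` for all `n`.
Primitivity makes some `K^t` an `ℓ¹`-contraction on vectors of total mass zero
(`sum_abs_sourceStep_le`), hence `πK^{tn} → ζ` for every distribution `π`
(`tendsto_iterate_sourceStep`), a contradiction as `V` is a neighborhood of `ζ`.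
-/

open Filter MeasureTheory Finset Set Topology

/-- The prediction step `π ↦ πK` of the source, as a map on row vectors. -/
def sourceStep {X : Type*} [Fintype X] (K : X → X → ℝ) (π : X → ℝ) : X → ℝ :=
  fun y => ∑ x, π x * K x y

lemma measurable_sourceStep {X : Type*} [Fintype X] (K : X → X → ℝ) :
    Measurable (sourceStep K) := by
  unfold sourceStep
  fun_prop

lemma iterate_sourceStep {X : Type*} [Fintype X] [DecidableEq X] (K : X → X → ℝ) (t : ℕ)
    (π : X → ℝ) : (sourceStep K)^[t] π = sourceStep (Kpow K t) π := by
  induction t generalizing π with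
  | zero => ext y; simp [sourceStep, Kpow]
  | succ t ih =>
    rw [Function.iterate_succ_apply, ih]
    ext y
    simp only [sourceStep, Kpow, Finset.sum_mul, Finset.mul_sum]
    rw [Finset.sum_comm]
    simp only [mul_assoc]

lemma sum_Kpow {X : Type*} [Fintype X] [DecidableEq X] {K : X → X → ℝ} (hK : IsMarkovMatrix K)
    (t : ℕ) (x : X) : ∑ y, Kpow K t x y = 1 := by
  induction t generalizing x with
  | zero => simp [Kpow]
  | succ t ih =>
    simp only [Kpow]
    rw [Finset.sum_comm]
    simp only [← Finset.mul_sum, ih, mul_one, (hK x).2]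

/-- Doeblin's contraction: on zero-mass vectors `v`, subtracting the constant `δ` from every entry
of the matrix leaves the product `v A` unchanged but lowers the (nonnegative) row sums. -/
lemma sum_abs_sourceStep_le {X : Type*} [Fintype X] {A : X → X → ℝ} {δ : ℝ}
    (hA : ∀ x, ∑ y, A x y = 1) (hδ : ∀ x y, δ ≤ A x y) (v : X → ℝ) (hv : ∑ x, v x = 0) :
    ∑ y, |sourceStep A v y| ≤ (1 - Fintype.card X * δ) * ∑ x, |v x| := by
  have h1 : ∀ y, |sourceStep A v y| ≤ ∑ x, |v x| * (A x y - δ) := by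
    intro y
    have : sourceStep A v y = ∑ x, v x * (A x y - δ) := by
      simp only [sourceStep, mul_sub, Finset.sum_sub_distrib, ← Finset.sum_mul, hv, zero_mul,
        sub_zero]
    rw [this]
    refine (Finset.abs_sum_le_sum_abs _ _).trans (Finset.sum_le_sum fun x _ => ?_)
    rw [abs_mul, abs_of_nonneg (sub_nonneg.2 (hδ x y))]
  refine (Finset.sum_le_sum fun y _ => h1 y).trans (le_of_eq ?_)
  rw [Finset.sum_comm, Finset.mul_sum]
  refine Finset.sum_congr rfl fun x _ => ?_
  rw [← Finset.mul_sum, Finset.sum_sub_distrib, hA]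
  simp [mul_comm]

/-- Convergence to equilibrium, along the multiples of a time `t` at which `K^t` is positive. -/
lemma tendsto_iterate_sourceStep {X : Type*} [Fintype X] [Nonempty X] [DecidableEq X]
    {K : X → X → ℝ} (hK : IsMarkovMatrix K) {t : ℕ} (ht : ∀ x y, 0 < Kpow K t x y)
    {ζ : X → ℝ} (hζ : IsInvariantDist K ζ) {π : X → ℝ} (hπ : π ∈ stdSimplex ℝ X) :
    Tendsto (fun n : ℕ => (sourceStep K)^[t * n] π) atTop (𝓝 ζ) := by
  set A := Kpow K t with hAdef
  have hA : ∀ x, ∑ y, A x y = 1 := sum_Kpow hK t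
  obtain ⟨p, hp⟩ := Finite.exists_min (fun p : X × X => A p.1 p.2)
  set δ := A p.1 p.2 with hδdef
  have hδ : ∀ x y, δ ≤ A x y := fun x y => hp (x, y)
  have hδ0 : 0 < δ := ht _ _
  have hcard : (0 : ℝ) < Fintype.card X := by exact_mod_cast Fintype.card_pos
  set r : ℝ := 1 - Fintype.card X * δ with hr
  have hr1 : r < 1 := by have := mul_pos hcard hδ0; linarith
  have hr0 : 0 ≤ r := by
    have h := Finset.sum_le_sum fun y (_ : y ∈ Finset.univ) => hδ p.1 y
    rw [hA] at h
    simp at h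
    linarith
  have hfixK : sourceStep K ζ = ζ := funext hζ.2
  have hfix : sourceStep A ζ = ζ := by
    rw [hAdef, ← iterate_sourceStep]
    exact Function.iterate_fixed hfixK t
  have hstep : (sourceStep K)^[t] = sourceStep A := funext (iterate_sourceStep K t)
  have hsub : ∀ a b, sourceStep A (a - b) = sourceStep A a - sourceStep A b := by
    intro a b
    ext y
    simp [sourceStep, sub_mul, Finset.sum_sub_distrib]
  have hmass : ∀ v, ∑ y, sourceStep A v y = ∑ x, v x := by
    intro v
    simp only [sourceStep]
    rw [Finset.sum_comm]
    simp only [← Finset.mul_sum, hA, mul_one]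
  have key : ∀ n : ℕ, (∑ x, ((sourceStep A)^[n] π - ζ) x = 0) ∧
      ∑ x, |((sourceStep A)^[n] π - ζ) x| ≤ r ^ n * ∑ x, |(π - ζ) x| := by
    intro n
    induction n with
    | zero => simp [hπ.2, hζ.1.2]
    | succ n ih =>
      have e : (sourceStep A)^[n + 1] π - ζ = sourceStep A ((sourceStep A)^[n] π - ζ) := by
        rw [hsub, hfix, Function.iterate_succ_apply']
      rw [e]
      refine ⟨(hmass _).trans ih.1, (sum_abs_sourceStep_le hA hδ _ ih.1).trans ?_⟩
      rw [pow_succ', mul_assoc]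
      exact mul_le_mul_of_nonneg_left ih.2 hr0
  simp only [Function.iterate_mul, hstep]
  rw [tendsto_pi_nhds]
  intro x
  rw [tendsto_iff_norm_sub_tendsto_zero]
  have hlim : Tendsto (fun n : ℕ => r ^ n * ∑ x, |(π - ζ) x|) atTop (𝓝 0) := by
    simpa using (tendsto_pow_atTop_nhds_zero_of_lt_one hr0 hr1).mul_const (∑ x, |(π - ζ) x|)
  refine squeeze_zero (fun _ => norm_nonneg _) (fun n => ?_) hlim
  refine le_trans ?_ (key n).2
  exact Finset.single_le_sum (f := fun x => |((sourceStep A)^[n] π - ζ) x|)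
    (fun _ _ => abs_nonneg _) (Finset.mem_univ x)

lemma nextPred_const {X M : Type*} [Fintype X] [DecidableEq M] (K : X → X → ℝ) {π : X → ℝ}
    (hπ : π ∈ stdSimplex ℝ X) (q : M) : nextPred K π (fun _ => q) q = sourceStep K π := by
  ext y
  simp [nextPred, sourceStep, hπ.2, mul_comm]

/-- From `π` the predictor moves to `πK` with probability at least `1 / |𝒬|`, because a constant
quantizer may be drawn; so a null
set of an invariant measure has null preimage under `π ↦ πK`. -/
lemma null_preimage_sourceStep {X M : Type*} [Fintype X] [DecidableEq X]
    [Fintype M] [Nonempty M] [DecidableEq M] {K : X → X → ℝ}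
    {φ : Measure (X → ℝ)} (hφ : IsPredInvariant M K φ) {U : Set (X → ℝ)}
    (hU : MeasurableSet U) (h0 : φ U = 0) : φ (sourceStep K ⁻¹' U) = 0 := by
  obtain ⟨hprob, hsupp, hinv⟩ := hφ
  set g : (X → ℝ) → ℝ := U.indicator 1 with hg
  have hgm : Measurable g := measurable_one.indicator hU
  have hg0 : ∀ π, 0 ≤ g π := fun π => Set.indicator_nonneg (fun _ _ => zero_le_one) π
  have hg1 : ∀ π, g π ≤ 1 := fun π =>
    Set.indicator_le_self' (f := (1 : (X → ℝ) → ℝ)) (fun _ _ => zero_le_one) π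
  have hsimp : ∀ᵐ π ∂φ, π ∈ stdSimplex ℝ X := hsupp
  have hnn : ∀ π ∈ stdSimplex ℝ X, ∀ s : Finset X, 0 ≤ ∑ x ∈ s, π x :=
    fun π hπ s => Finset.sum_nonneg fun x _ => hπ.1 x
  have hle1 : ∀ π ∈ stdSimplex ℝ X, ∀ s : Finset X, ∑ x ∈ s, π x ≤ 1 := fun π hπ s => by
    rw [← hπ.2]
    exact Finset.sum_le_sum_of_subset_of_nonneg (Finset.subset_univ s) fun x _ _ => hπ.1 x
  have hterm0 : ∀ π ∈ stdSimplex ℝ X, ∀ (Q : X → M) (q : M),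
      0 ≤ (∑ x ∈ Finset.univ.filter (fun x => Q x = q), π x) * g (nextPred K π Q q) :=
    fun π hπ Q q => mul_nonneg (hnn π hπ _) (hg0 _)
  have hint : Integrable (Tker M K g) φ := by
    unfold Tker
    refine Integrable.const_mul (integrable_finsetSum _ fun Q _ =>
      integrable_finsetSum _ fun q _ => ?_) _
    refine Integrable.of_bound (C := 1) (Measurable.aestronglyMeasurable ?_) ?_
    · refine Measurable.mul (by fun_prop) (hgm.comp ?_)
      unfold nextPred
      fun_prop
    · filter_upwards [hsimp] with π hπ
      rw [Real.norm_of_nonneg (hterm0 π hπ Q q)]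
      exact mul_le_one₀ (hle1 π hπ _) (hg0 _) (hg1 _)
  have hTnn : 0 ≤ᵐ[φ] Tker M K g := by
    filter_upwards [hsimp] with π hπ
    exact mul_nonneg (by positivity)
      (Finset.sum_nonneg fun Q _ => Finset.sum_nonneg fun q _ => hterm0 π hπ Q q)
  have hT : ∫ π, Tker M K g π ∂φ = 0 := by
    rw [hinv g hgm ⟨1, fun π => abs_le.2 ⟨by linarith [hg0 π], hg1 π⟩⟩, hg,
      integral_indicator_one hU, measureReal_def, h0, ENNReal.toReal_zero]
  rw [integral_eq_zero_iff_of_nonneg_ae hTnn hint] at hT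
  rw [measure_eq_zero_iff_ae_notMem]
  filter_upwards [hsimp, hT] with π hπ hTπ hmem
  obtain ⟨c⟩ := ‹Nonempty M›
  have hcard : (0 : ℝ) < (Fintype.card (X → M) : ℝ)⁻¹ := by
    have : Nonempty (X → M) := ⟨fun _ => c⟩
    exact inv_pos.2 (by exact_mod_cast Fintype.card_pos)
  refine absurd hTπ (ne_of_gt (mul_pos hcard ?_))
  refine Finset.sum_pos' (fun Q _ => Finset.sum_nonneg fun q _ => hterm0 π hπ Q q)
    ⟨fun _ => c, Finset.mem_univ _, ?_⟩
  refine Finset.sum_pos' (fun q _ => hterm0 π hπ _ q) ⟨c, Finset.mem_univ _, ?_⟩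
  have hgU : g (sourceStep K π) = 1 := Set.indicator_of_mem (Set.mem_preimage.1 hmem) _
  rw [nextPred_const K hπ, hgU]
  simp [hπ.2]

/-- The unique invariant distribution `ζ` of the source lies in the
support of `φ`, the invariant measure of the predictor process under the uniform policy:
every open neighborhood of `ζ` in `P(𝕏)` has positive `φ`-measure. -/
theorem stmt14 {X : Type*} (M : Type*)
    [Fintype X] [Nonempty X] [DecidableEq X]
    [Fintype M] [Nonempty M] [DecidableEq M]
    (K : X → X → ℝ) (hK : IsMarkovMatrix K) (hprim : IsPrimitiveMat K)
    (ζ : X → ℝ) (hζ : IsInvariantDist K ζ)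
    (φ : Measure (X → ℝ)) (hφ : IsPredInvariant M K φ) :
    ∀ V : Set (X → ℝ), IsOpen V → ζ ∈ V → 0 < φ V := by
  intro V hV hζV
  rw [pos_iff_ne_zero]
  intro h0
  obtain ⟨t, ht⟩ := hprim
  have hnull : ∀ n, φ ((sourceStep K)^[n] ⁻¹' V) = 0 := by
    intro n
    induction n with
    | zero => simpa using h0
    | succ n ih =>
      rw [Function.iterate_succ, Set.preimage_comp]
      exact null_preimage_sourceStep hφ
        ((measurable_sourceStep K).iterate n hV.measurableSet) ih
  have hae : ∀ᵐ π ∂φ, ∀ n, (sourceStep K)^[n] π ∉ V :=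
    ae_all_iff.2 fun n => measure_eq_zero_iff_ae_notMem.1 (hnull n)
  have hsimp : ∀ᵐ π ∂φ, π ∈ stdSimplex ℝ X := hφ.2.1
  have := hφ.1
  obtain ⟨π, hπ, hπV⟩ := (hsimp.and hae).exists
  obtain ⟨n, hn⟩ :=
    ((tendsto_iterate_sourceStep hK ht hζ hπ).eventually (hV.mem_nhds hζV)).exists
  exact hπV _ hn
end

section
/- Consider an MDP satisfying: (i) the cost c is continuous, nonnegative, and bounded; (ii) the state space 𝖹 is a compact metric space; (iii) the action space 𝖴 is a compact metric space; (iv) the transition kernel P(·|z,u) is weakly continuous in (z,u); (v) the family {h_β : β ∈ (0,1)}, where h_β(z) = J*_β(z) − J*_β(z₀) for some fixed z₀ ∈ 𝖹, is uniformly bounded and equicontinuous. Then for every ε > 0 there exists β* ∈ (0,1) such that for all β ∈ [β*, 1): if a stationary policy γ_β = {f_β, f_β, …} satisfies J_β(z, γ_β) ≤ J*_β(z) + δ for all z ∈ 𝖹 and some δ ≥ 0, then J(z, γ_β) ≤ g* + ε + (1−β)δ for all z ∈ 𝖹, where g* is the constant optimal average cost (equal to J*(z) for all z, and to lim_{β↑1}(1−β)J*_β(z)).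 -/
/-!
Write `W` for the discounted cost of the stationary policy `f`, `P` for its one-step transition
operator and `c_f` for its running cost. The policy evaluation equation `W = c_f + β P W`
(`discVS_eq`) reads `c_f = (W - P W) + (1 - β) P W`. Iterating it gives the telescoping bound
`∑_{t < T} P^t c_f ≤ W + T (1 - β) sup W` (`sum_iterK_le`), so the average cost of `f` is at most
`(1 - β) sup W` (`avgVS_le`). For a `δ`-optimal policy `W ≤ J*_β + δ ≤ J*_β(z₀) + C + δ`, with `C`
a uniform bound on the relative value functions; since `(1 - β) J*_β(z₀) → g*` and
`(1 - β) C → 0` as `β ↑ 1`, the claim follows, uniformly in `δ` and `f`.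

Weak continuity of the kernel serves only to make the transition kernel of `f` measurable
(`measurable_kernel_comp`), so that all the integrals in `P^t c_f` are genuine.
-/

open Filter MeasureTheory Finset Set Topology

section MDP

variable {Z U : Type*} [MeasurableSpace Z]

/-- `t`-step expectation operator of the state process of an MDP with kernel `κ`
under the stationary policy `f`; `iterK κ f t g z = E^f_z[g(Z_t)]`. -/
noncomputable def iterK (κ : Z → U → Measure Z) (f : Z → U) : ℕ → (Z → ℝ) → Z → ℝ
  | 0, g => g
  | t + 1, g => fun z => ∫ z', iterK κ f t g z' ∂(κ z (f z))

/-- A deterministic history-dependent (admissible) policy. -/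
def HistPolicy (Z U : Type*) := (t : ℕ) → (Fin (t + 1) → Z) → U

/-- Expectation `E^ρ_z[F(Z_0,…,Z_t)]` of a functional of the state history, under the
history-dependent policy `ρ`, starting from `z`. -/
noncomputable def expectH (κ : Z → U → Measure Z) (ρ : HistPolicy Z U) (z : Z) :
    (t : ℕ) → ((Fin (t + 1) → Z) → ℝ) → ℝ
  | 0, F => F fun _ => z
  | t + 1, F => expectH κ ρ z t fun h => ∫ z', F (Fin.snoc h z') ∂(κ (h (Fin.last t)) (ρ t h))

/-- Discounted cost of the stationary policy `f`. -/
noncomputable def discVS (κ : Z → U → Measure Z) (f : Z → U) (c : Z → U → ℝ) (β : ℝ)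
    (z : Z) : ℝ :=
  ∑' t : ℕ, β ^ t * iterK κ f t (fun z' => c z' (f z')) z

/-- Long-run average cost of the stationary policy `f`. -/
noncomputable def avgVS (κ : Z → U → Measure Z) (f : Z → U) (c : Z → U → ℝ) (z : Z) : ℝ :=
  Filter.limsup
    (fun T : ℕ => (∑ t ∈ Finset.range T, iterK κ f t (fun z' => c z' (f z')) z) / (T : ℝ))
    Filter.atTop

/-- Discounted cost of a history-dependent policy `ρ`. -/
noncomputable def discVH (κ : Z → U → Measure Z) (ρ : HistPolicy Z U) (c : Z → U → ℝ)
    (β : ℝ) (z : Z) : ℝ :=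
  ∑' t : ℕ, β ^ t * expectH κ ρ z t fun h => c (h (Fin.last t)) (ρ t h)

/-- Optimal discounted cost over all (deterministic, measurable, history-dependent)
admissible policies. -/
noncomputable def discVstar [MeasurableSpace U] (κ : Z → U → Measure Z) (c : Z → U → ℝ)
    (β : ℝ) (z : Z) : ℝ :=
  ⨅ ρ : {ρ : HistPolicy Z U // ∀ t, Measurable (ρ t)}, discVH κ ρ.1 c β z

/-- Long-run average cost of a history-dependent policy `ρ`. -/
noncomputable def avgVH (κ : Z → U → Measure Z) (ρ : HistPolicy Z U) (c : Z → U → ℝ)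
    (z : Z) : ℝ :=
  Filter.limsup
    (fun T : ℕ => (∑ t ∈ Finset.range T, expectH κ ρ z t fun h => c (h (Fin.last t)) (ρ t h))
      / (T : ℝ))
    Filter.atTop

/-- Optimal long-run average cost over all (deterministic, measurable, history-dependent)
admissible policies. -/
noncomputable def avgVstar [MeasurableSpace U] (κ : Z → U → Measure Z) (c : Z → U → ℝ)
    (z : Z) : ℝ :=
  ⨅ ρ : {ρ : HistPolicy Z U // ∀ t, Measurable (ρ t)}, avgVH κ ρ.1 c z

/-- Expectation of a functional of the joint state/action history of an MDP with kernel `κ`,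
under the stationary randomized (exploration) policy `η`, when the initial state has
distribution `ν`. -/
noncomputable def lawExp [Fintype U] (ν : Measure Z) (κ : Z → U → Measure Z) (η : Z → PMF U) :
    (t : ℕ) → ((Fin (t + 1) → Z × U) → ℝ) → ℝ
  | 0, F => ∫ z, (∑ u : U, (η z u).toReal * F fun _ => (z, u)) ∂ν
  | t + 1, F => lawExp ν κ η t fun h => ∫ z', (∑ u' : U,
      (η z' u').toReal * F (Fin.snoc h (z', u'))) ∂(κ (h (Fin.last t)).1 (h (Fin.last t)).2)

open Classical in
/-- The quantized Q-learning iterates for a general MDP, along a state/action trajectory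
`(zs, us)`, with state quantizer `f`. -/
noncomputable def QFgen {Z U ι : Type*} [Fintype U] [Nonempty U]
    (c : Z → U → ℝ) (β : ℝ) (f : Z → ι) (zs : ℕ → Z) (us : ℕ → U) : ℕ → ι × U → ℝ
  | 0, _ => 0
  | t + 1, s =>
      let st : ι × U := (f (zs t), us t)
      let α : ℝ := 1 / (1 + ∑ k ∈ Finset.range (t + 1),
        if (f (zs k), us k) = st then (1 : ℝ) else 0)
      if s = st then
        (1 - α) * QFgen c β f zs us t st +
          α * (c (zs t) (us t) + β * Finset.univ.inf' Finset.univ_nonempty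
            fun v : U => QFgen c β f zs us t (f (zs (t + 1)), v))
      else QFgen c β f zs us t s

end MDP

open scoped NNReal ENNReal

/-- A weakly continuous family of probability measures is measurable along a measurable policy:
the measures of closed sets are limits of integrals of continuous functions, and the closed sets
form a π-system generating the Borel σ-algebra. -/
lemma measurable_kernel_comp {Z U : Type*}
    [MetricSpace Z] [CompactSpace Z] [MeasurableSpace Z] [BorelSpace Z]
    [MetricSpace U] [CompactSpace U] [MeasurableSpace U] [BorelSpace U]
    (κ : Z → U → Measure Z) (hκp : ∀ z u, IsProbabilityMeasure (κ z u))
    (hweak : ∀ g : Z → ℝ, Continuous g →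
      Continuous fun p : Z × U => ∫ z', g z' ∂(κ p.1 p.2))
    (f : Z → U) (hf : Measurable f) : Measurable fun z => κ z (f z) := by
  have hB : ‹MeasurableSpace Z› = MeasurableSpace.generateFrom {s : Set Z | IsClosed s} := by
    rw [BorelSpace.measurable_eq (α := Z), borel_eq_generateFrom_isClosed]
  refine Measurable.measure_of_isPiSystem_of_isProbabilityMeasure
    (μ := fun z => κ z (f z)) hB isPiSystem_isClosed ?_
  intro F hF
  have hF' : IsClosed F := hF
  have hpos : ∀ n : ℕ, (0 : ℝ) < 1 / ((n : ℝ) + 1) := fun n => Nat.one_div_pos_of_nat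
  have hreal : Measurable fun z => (κ z (f z)).real F := by
    refine measurable_of_tendsto_metrizable
      (f := fun (n : ℕ) z => ∫ ω, (thickenedIndicator (hpos n) F ω : ℝ) ∂(κ z (f z))) ?_ ?_
    · intro n
      have hg : Continuous fun ω => (thickenedIndicator (hpos n) F ω : ℝ) :=
        NNReal.continuous_coe.comp (thickenedIndicator (hpos n) F).continuous
      exact (hweak _ hg).measurable.comp (measurable_id.prodMk hf)
    · rw [tendsto_pi_nhds]
      intro z
      exact tendsto_integral_thickenedIndicator_of_isClosed (κ z (f z)) hF' hpos
        tendsto_one_div_add_atTop_nhds_zero_nat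
  have : (fun z => κ z (f z) F) = fun z => ENNReal.ofReal ((κ z (f z)).real F) := by
    funext z
    rw [ofReal_measureReal]
  rw [this]
  exact hreal.ennreal_ofReal

section Stationary

variable {Z U : Type*} [MeasurableSpace Z] {κ : Z → U → Measure Z} {f : Z → U}

lemma measurable_iterK
    (hk : Measurable fun z => κ z (f z)) {g : Z → ℝ} (hg : Measurable g) (t : ℕ) :
    Measurable (iterK κ f t g) := by
  induction t with
  | zero => exact hg
  | succ t ih =>
    let K : ProbabilityTheory.Kernel Z Z := ⟨fun z => κ z (f z), hk⟩
    exact (ih.stronglyMeasurable.integral_kernel (κ := K)).measurable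

lemma abs_iterK_le (hκp : ∀ z u, IsProbabilityMeasure (κ z u))
    {g : Z → ℝ} {C : ℝ} (hC : ∀ z, |g z| ≤ C) (t : ℕ) (z : Z) :
    |iterK κ f t g z| ≤ C := by
  induction t generalizing z with
  | zero => exact hC z
  | succ t ih =>
    have := norm_integral_le_of_norm_le_const (μ := κ z (f z)) (f := iterK κ f t g) (C := C)
      (Eventually.of_forall ih)
    simpa [iterK] using this

lemma iterK_nonneg {g : Z → ℝ} (h0 : ∀ z, 0 ≤ g z) (t : ℕ) (z : Z) :
    0 ≤ iterK κ f t g z := by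
  induction t generalizing z with
  | zero => exact h0 z
  | succ t ih => exact integral_nonneg ih

lemma integrable_iterK (hκp : ∀ z u, IsProbabilityMeasure (κ z u))
    (hk : Measurable fun z => κ z (f z)) {g : Z → ℝ} (hg : Measurable g)
    {C : ℝ} (hC : ∀ z, |g z| ≤ C) (t : ℕ) (z : Z) :
    Integrable (iterK κ f t g) (κ z (f z)) :=
  .of_bound (measurable_iterK hk hg t).aestronglyMeasurable C
    (Eventually.of_forall (abs_iterK_le hκp hC t))

lemma summable_discounted (hκp : ∀ z u, IsProbabilityMeasure (κ z u))
    {g : Z → ℝ} {C : ℝ} (hC : ∀ z, |g z| ≤ C) {β : ℝ} (hβ0 : 0 ≤ β) (hβ1 : β < 1) (z : Z) :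
    Summable fun t : ℕ => β ^ t * iterK κ f t g z := by
  refine Summable.of_norm_bounded
    ((summable_geometric_of_lt_one hβ0 hβ1).mul_right C) fun t => ?_
  rw [Real.norm_eq_abs, abs_mul, abs_of_nonneg (pow_nonneg hβ0 t)]
  exact mul_le_mul_of_nonneg_left (abs_iterK_le hκp hC t z) (pow_nonneg hβ0 t)

lemma discVS_nonneg {c : Z → U → ℝ} (h0 : ∀ z, 0 ≤ c z (f z)) {β : ℝ} (hβ0 : 0 ≤ β) (z : Z) :
    0 ≤ discVS κ f c β z :=
  tsum_nonneg fun t => mul_nonneg (pow_nonneg hβ0 t) (iterK_nonneg h0 t z)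

/-- The policy evaluation equation `W = c_f + β P W`, together with the integrability of `W`
that makes `P W` a genuine integral. -/
lemma discVS_eq (hκp : ∀ z u, IsProbabilityMeasure (κ z u))
    (hk : Measurable fun z => κ z (f z)) {c : Z → U → ℝ}
    (hg : Measurable fun z => c z (f z)) {C : ℝ} (hC : ∀ z, |c z (f z)| ≤ C)
    {β : ℝ} (hβ0 : 0 ≤ β) (hβ1 : β < 1) (z : Z) :
    Integrable (discVS κ f c β) (κ z (f z)) ∧
      discVS κ f c β z = c z (f z) + β * ∫ z', discVS κ f c β z' ∂(κ z (f z)) := by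
  set g : Z → ℝ := fun z => c z (f z)
  have hint : ∀ t : ℕ, Integrable (fun z' => β ^ t * iterK κ f t g z') (κ z (f z)) :=
    fun t => (integrable_iterK hκp hk hg hC t z).const_mul _
  have hbound : ∀ (t : ℕ) z', ‖β ^ t * iterK κ f t g z'‖ ≤ β ^ t * C := by
    intro t z'
    rw [Real.norm_eq_abs, abs_mul, abs_of_nonneg (pow_nonneg hβ0 t)]
    exact mul_le_mul_of_nonneg_left (abs_iterK_le hκp hC t z') (pow_nonneg hβ0 t)
  have hgeom : Summable fun t : ℕ => β ^ t * C :=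
    (summable_geometric_of_lt_one hβ0 hβ1).mul_right C
  have hsum : Summable fun t : ℕ => ∫ z', ‖β ^ t * iterK κ f t g z'‖ ∂(κ z (f z)) := by
    refine Summable.of_nonneg_of_le (fun t => integral_nonneg fun _ => norm_nonneg _)
      (fun t => ?_) hgeom
    calc _ ≤ ∫ _, β ^ t * C ∂(κ z (f z)) :=
          integral_mono (hint t).norm (integrable_const _) (hbound t)
      _ = β ^ t * C := by simp
  have hmeas : Measurable (discVS κ f c β) := by
    have : ∀ t : ℕ, Measurable fun z' => β ^ t * iterK κ f t g z' :=
      fun t => (measurable_iterK hk hg t).const_mul _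
    refine measurable_of_tendsto_metrizable
      (f := fun (n : ℕ) z' => ∑ t ∈ Finset.range n, β ^ t * iterK κ f t g z')
      (fun n => Finset.measurable_sum _ fun t _ => this t) ?_
    rw [tendsto_pi_nhds]
    exact fun z' => (summable_discounted hκp hC hβ0 hβ1 z').hasSum.tendsto_sum_nat
  refine ⟨.of_bound hmeas.aestronglyMeasurable (∑' t : ℕ, β ^ t * C)
    (Eventually.of_forall fun z' => tsum_of_norm_bounded hgeom.hasSum fun t => hbound t z'), ?_⟩
  have hex : ∫ z', discVS κ f c β z' ∂(κ z (f z))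
      = ∑' t : ℕ, β ^ t * iterK κ f (t + 1) g z := by
    have h := integral_tsum_of_summable_integral_norm hint hsum
    simp only [integral_const_mul] at h
    exact h.symm
  rw [hex, ← tsum_mul_left]
  change ∑' t : ℕ, β ^ t * iterK κ f t g z = _
  rw [(summable_discounted hκp hC hβ0 hβ1 z).tsum_eq_zero_add]
  congr 1
  · simp [iterK]
  · exact tsum_congr fun t => by ring

/-- The telescoping bound obtained by iterating `c_f = (W - P W) + (1 - β) P W`. -/
lemma sum_iterK_le (hκp : ∀ z u, IsProbabilityMeasure (κ z u))
    (hk : Measurable fun z => κ z (f z)) {c : Z → U → ℝ}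
    (hg : Measurable fun z => c z (f z)) (h0 : ∀ z, 0 ≤ c z (f z))
    {C : ℝ} (hC : ∀ z, |c z (f z)| ≤ C)
    {β : ℝ} (hβ0 : 0 ≤ β) (hβ1 : β < 1) {M : ℝ} (hM : ∀ z, discVS κ f c β z ≤ M)
    (T : ℕ) (z : Z) :
    ∑ t ∈ Finset.range T, iterK κ f t (fun z' => c z' (f z')) z
      ≤ discVS κ f c β z + T * ((1 - β) * M) := by
  induction T generalizing z with
  | zero => simpa using discVS_nonneg h0 hβ0 z
  | succ T ih =>
    obtain ⟨hWi, hW⟩ := discVS_eq hκp hk hg hC hβ0 hβ1 z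
    have hi : ∀ t : ℕ, Integrable (iterK κ f t fun z' => c z' (f z')) (κ z (f z)) :=
      fun t => integrable_iterK hκp hk hg hC t z
    have hPS : ∑ t ∈ Finset.range T, iterK κ f (t + 1) (fun z' => c z' (f z')) z
        ≤ (∫ z', discVS κ f c β z' ∂(κ z (f z))) + T * ((1 - β) * M) := by
      calc _ = ∫ z', ∑ t ∈ Finset.range T, iterK κ f t (fun z' => c z' (f z')) z'
              ∂(κ z (f z)) := (integral_finsetSum _ fun t _ => hi t).symm
        _ ≤ ∫ z', (discVS κ f c β z' + T * ((1 - β) * M)) ∂(κ z (f z)) :=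
            integral_mono (integrable_finsetSum _ fun t _ => hi t)
              (hWi.add (integrable_const _)) ih
        _ = _ := by rw [integral_add hWi (integrable_const _)]; simp
    have hPW : ∫ z', discVS κ f c β z' ∂(κ z (f z)) ≤ M := by
      calc _ ≤ ∫ _, M ∂(κ z (f z)) := integral_mono hWi (integrable_const _) hM
        _ = M := by simp
    have h1 : (1 - β) * ∫ z', discVS κ f c β z' ∂(κ z (f z)) ≤ (1 - β) * M :=
      mul_le_mul_of_nonneg_left hPW (by linarith)
    rw [Finset.sum_range_succ']
    have h2 : iterK κ f 0 (fun z' => c z' (f z')) z = c z (f z) := rfl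
    rw [h2]
    push_cast
    linarith

lemma avgVS_le (hκp : ∀ z u, IsProbabilityMeasure (κ z u))
    (hk : Measurable fun z => κ z (f z)) {c : Z → U → ℝ}
    (hg : Measurable fun z => c z (f z)) (h0 : ∀ z, 0 ≤ c z (f z))
    {C : ℝ} (hC : ∀ z, |c z (f z)| ≤ C)
    {β : ℝ} (hβ0 : 0 ≤ β) (hβ1 : β < 1) {M : ℝ} (hM : ∀ z, discVS κ f c β z ≤ M) (z : Z) :
    avgVS κ f c z ≤ (1 - β) * M := by
  have hlim : Tendsto (fun T : ℕ => discVS κ f c β z / (T : ℝ) + (1 - β) * M) atTop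
      (𝓝 ((1 - β) * M)) := by
    simpa using (tendsto_const_div_atTop_nhds_zero_nat (discVS κ f c β z)).add_const
      ((1 - β) * M)
  rw [← hlim.limsup_eq]
  refine limsup_le_limsup ?_ ?_ hlim.isBoundedUnder_le
  · filter_upwards [eventually_gt_atTop 0] with T hT
    have hT' : (0 : ℝ) < T := by exact_mod_cast hT
    rw [div_le_iff₀ hT', add_mul, div_mul_cancel₀ _ hT'.ne', mul_comm ((1 - β) * M)]
    exact sum_iterK_le hκp hk hg h0 hC hβ0 hβ1 hM T z
  · exact IsBoundedUnder.isCoboundedUnder_le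
      (isBoundedUnder_of ⟨0, fun T => div_nonneg
        (Finset.sum_nonneg fun t _ => iterK_nonneg h0 t z) (Nat.cast_nonneg T)⟩)

end Stationary

/-- Under the weak Feller/compactness assumptions (i)–(iv) and the
uniform boundedness and equicontinuity of the relative discounted value functions
`h_β = J*_β(·) − J*_β(z₀)` (assumption (v)), for every `ε > 0` there is `β* ∈ (0,1)` such
that for all `β ∈ [β*,1)`: any stationary policy `γ_β = {f_β,f_β,…}` that is `δ`-optimal
for the `β`-discounted cost (`J_β(z,γ_β) ≤ J*_β(z) + δ` for all `z`) has long-run average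
cost at most `g* + ε + (1−β)δ` from every initial state, where `g*` is the constant
optimal average cost, `g* = J*(z) = lim_{β↑1}(1−β)J*_β(z)`. -/
theorem stmt16 {Z U : Type*}
    [MetricSpace Z] [CompactSpace Z] [MeasurableSpace Z] [BorelSpace Z]
    [MetricSpace U] [CompactSpace U] [MeasurableSpace U] [BorelSpace U]
    (κ : Z → U → Measure Z) (hκp : ∀ z u, IsProbabilityMeasure (κ z u))
    (c : Z → U → ℝ) (hcc : Continuous (Function.uncurry c))
    (hc0 : ∀ z u, 0 ≤ c z u) (hcb : ∃ C, ∀ z u, |c z u| ≤ C)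
    (hweak : ∀ g : Z → ℝ, Continuous g →
      Continuous fun p : Z × U => ∫ z', g z' ∂(κ p.1 p.2))
    (z₀ : Z)
    (hbd : ∃ C, ∀ β ∈ Set.Ioo (0 : ℝ) 1, ∀ z,
      |discVstar κ c β z - discVstar κ c β z₀| ≤ C)
    (heq : Equicontinuous fun β : Set.Ioo (0 : ℝ) 1 =>
      fun z => discVstar κ c (β : ℝ) z - discVstar κ c (β : ℝ) z₀)
    (gstar : ℝ) (hg0 : 0 ≤ gstar)
    (hgopt : ∀ z, avgVstar κ c z = gstar)
    (hglim : ∀ z, Filter.Tendsto (fun β => (1 - β) * discVstar κ c β z)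
      (nhdsWithin 1 (Set.Iio (1 : ℝ))) (nhds gstar)) :
    ∀ ε > (0 : ℝ), ∃ βstar ∈ Set.Ioo (0 : ℝ) 1, ∀ β ∈ Set.Ico βstar (1 : ℝ),
      ∀ δ : ℝ, 0 ≤ δ → ∀ fβ : Z → U, Measurable fβ →
        (∀ z, discVS κ fβ c β z ≤ discVstar κ c β z + δ) →
        ∀ z, avgVS κ fβ c z ≤ gstar + ε + (1 - β) * δ := by
  intro ε hε
  obtain ⟨C, hC⟩ := hbd
  obtain ⟨B, hB⟩ := hcb
  have hone : Tendsto (fun β : ℝ => (1 - β) * C) (𝓝[<] 1) (𝓝 0) := by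
    have : Tendsto (fun β : ℝ => (1 - β) * C) (𝓝 1) (𝓝 ((1 - 1) * C)) :=
      (by fun_prop : Continuous fun β : ℝ => (1 - β) * C).tendsto 1
    simpa using this.mono_left nhdsWithin_le_nhds
  have hsum := (hglim z₀).add hone
  have hev : ∀ᶠ β in 𝓝[<] (1 : ℝ), (1 - β) * discVstar κ c β z₀ + (1 - β) * C < gstar + ε :=
    hsum.eventually_lt_const (by linarith)
  obtain ⟨l, hl, hls⟩ := mem_nhdsLT_iff_exists_Ico_subset.1 hev
  have hl1 : l < 1 := hl
  refine ⟨max l (1 / 2), ⟨lt_max_of_lt_right (by norm_num), max_lt hl1 (by norm_num)⟩, ?_⟩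
  intro β hβ δ hδ fβ hfβ hopt z
  have hβ1 : β < 1 := hβ.2
  have hβl : l ≤ β := (le_max_left _ _).trans hβ.1
  have hβ0 : 0 < β := by
    have := (le_max_right l (1 / 2)).trans hβ.1
    linarith
  have hkey : (1 - β) * discVstar κ c β z₀ + (1 - β) * C < gstar + ε := hls ⟨hβl, hβ1⟩
  have hM : ∀ z, discVS κ fβ c β z ≤ discVstar κ c β z₀ + C + δ := fun z => by
    have h1 := hopt z
    have h2 := (abs_le.1 (hC β ⟨hβ0, hβ1⟩ z)).2
    linarith
  have hcm : Measurable fun z => c z (fβ z) :=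
    hcc.measurable.comp (measurable_id.prodMk hfβ)
  have := avgVS_le hκp (measurable_kernel_comp κ hκp hweak fβ hfβ) hcm (fun z => hc0 z _)
    (fun z => hB z _) hβ0.le hβ1 hM z
  nlinarith
end
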